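/- Assume ρ s > 0 for every state s. Let Π* be the set of optimal policies, Π* = {π : π is a policy and J(π') ≤ J(π) for every policy π'}. Then there exists exactly one policy π* ∈ Π* maximizing the discounted-visitation-weighted entropy over Π*; that is, there is a unique π* ∈ Π* such that ∑_s d_ρ^π(s) · E(π,s) ≤ ∑_s d_ρ^{π*}(s) · E(π*,s) for every π ∈ Π*. -/

import Mathlib

open Finset Matrix

noncomputable section

variable {S A : Type*}

/-- A transition kernel: nonnegative entries, rows summing to one. -/
def IsKernel [Fintype S] [Fintype A] (K : S → A → S → ℝ) : Prop :=
  (∀ s a s', 0 ≤ K s a s') ∧ (∀ s a, ∑ s', K s a s' = 1)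

/-- A (stochastic) policy: nonnegative entries, rows summing to one. -/
def IsPolicy [Fintype A] (π : S → A → ℝ) : Prop :=
  (∀ s a, 0 ≤ π s a) ∧ (∀ s, ∑ a, π s a = 1)

/-- The policy-induced transition matrix `P^π`. -/
def Pmat [Fintype A] (K : S → A → S → ℝ) (π : S → A → ℝ) : Matrix S S ℝ :=
  Matrix.of fun s s' => ∑ a, π s a * K s a s'

/-- The entropy `E(π, s)` of a policy at state `s`. -/
def entS [Fintype A] (π : S → A → ℝ) (s : S) : ℝ :=
  ∑ a, -(π s a * Real.log (π s a))

/-- The entropy-regularized one-step cost `c_τ^π`. -/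
def regCost [Fintype A] (r : S → A → ℝ) (τ : ℝ) (π : S → A → ℝ) (s : S) : ℝ :=
  (∑ a, π s a * r s a) + τ * entS π s

/-- The entropy-regularized value function `V_τ^π`. -/
def Vreg [Fintype S] [Fintype A] [DecidableEq S] (K : S → A → S → ℝ) (r : S → A → ℝ)
    (γ τ : ℝ) (π : S → A → ℝ) : S → ℝ :=
  ∑' k : ℕ, γ ^ k • ((Pmat K π) ^ k *ᵥ regCost r τ π)

/-- The entropy-regularized expected return `J_τ(π)`. -/
def Jreg [Fintype S] [Fintype A] [DecidableEq S] (K : S → A → S → ℝ) (r : S → A → ℝ)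
    (γ τ : ℝ) (ρ : S → ℝ) (π : S → A → ℝ) : ℝ :=
  ∑ s, ρ s * Vreg K r γ τ π s

/-- The discounted state-visitation distribution `d_ρ^π`. -/
def dvisit [Fintype S] [Fintype A] [DecidableEq S] (K : S → A → S → ℝ)
    (γ : ℝ) (ρ : S → ℝ) (π : S → A → ℝ) : S → ℝ :=
  (1 - γ) • ∑' k : ℕ, γ ^ k • (((Pmat K π)ᵀ) ^ k *ᵥ ρ)

theorem series_eq [Fintype S] [DecidableEq S] (M : Matrix S S ℝ) (v : S → ℝ) (γ C : ℝ)
    (hγ0 : 0 < γ) (hγ1 : γ < 1) (hC : ∀ k s, |(M ^ k *ᵥ v) s| ≤ C) :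
    Summable (fun k : ℕ => γ ^ k • (M ^ k *ᵥ v)) ∧
    (∑' k : ℕ, γ ^ k • (M ^ k *ᵥ v)) = v + γ • (M *ᵥ ∑' k : ℕ, γ ^ k • (M ^ k *ᵥ v)) := by
  have hs : Summable (fun k : ℕ => γ ^ k • (M ^ k *ᵥ v)) := by
    rw [Pi.summable]
    intro s
    refine Summable.of_norm_bounded (g := fun k => γ ^ k * C)
      ((summable_geometric_of_lt_one hγ0.le hγ1).mul_right C) ?_
    intro k
    rw [Pi.smul_apply, smul_eq_mul, norm_mul, Real.norm_eq_abs, Real.norm_eq_abs,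
      abs_of_nonneg (pow_nonneg hγ0.le k)]
    exact mul_le_mul_of_nonneg_left (hC k s) (pow_nonneg hγ0.le k)
  refine ⟨hs, ?_⟩
  let L : (S → ℝ) →L[ℝ] (S → ℝ) := LinearMap.toContinuousLinearMap (γ • Matrix.mulVecLin M)
  have hL : ∀ w, L w = γ • (M *ᵥ w) := fun w => rfl
  rw [← hL, L.map_tsum hs]
  conv_lhs => rw [hs.tsum_eq_zero_add]
  congr 1
  · simp
  · congr 1
    funext k
    rw [hL, mulVec_smul, smul_smul, mulVec_mulVec, pow_succ' M, pow_succ' γ]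

theorem Pmat_nonneg [Fintype S] [Fintype A] {K : S → A → S → ℝ} (hK : IsKernel K)
    {π : S → A → ℝ} (hπ : IsPolicy π) (s s' : S) : 0 ≤ Pmat K π s s' :=
  Finset.sum_nonneg fun a _ => mul_nonneg (hπ.1 s a) (hK.1 s a s')

theorem Pmat_sum [Fintype S] [Fintype A] {K : S → A → S → ℝ} (hK : IsKernel K)
    {π : S → A → ℝ} (hπ : IsPolicy π) (s : S) : ∑ s', Pmat K π s s' = 1 := by
  simp only [Pmat, Matrix.of_apply]
  rw [Finset.sum_comm]
  simp only [← Finset.mul_sum, hK.2, mul_one, hπ.2]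

theorem Pmat_pow_bound [Fintype S] [DecidableEq S] [Fintype A] {K : S → A → S → ℝ}
    (hK : IsKernel K) {π : S → A → ℝ} (hπ : IsPolicy π) (c : S → ℝ) (C : ℝ)
    (hc : ∀ s, |c s| ≤ C) (k : ℕ) : ∀ s, |((Pmat K π) ^ k *ᵥ c) s| ≤ C := by
  induction k with
  | zero => simpa using hc
  | succ k ih =>
    intro s
    rw [pow_succ', ← mulVec_mulVec]
    simp only [mulVec, dotProduct]
    refine (Finset.abs_sum_le_sum_abs _ _).trans ?_
    calc _ ≤ ∑ s', Pmat K π s s' * C := by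
          refine Finset.sum_le_sum fun s' _ => ?_
          rw [abs_mul, abs_of_nonneg (Pmat_nonneg hK hπ s s')]
          exact mul_le_mul_of_nonneg_left (ih s') (Pmat_nonneg hK hπ s s')
      _ = C := by rw [← Finset.sum_mul, Pmat_sum hK hπ, one_mul]

theorem PmatT_pow [Fintype S] [DecidableEq S] [Fintype A] {K : S → A → S → ℝ}
    (hK : IsKernel K) {π : S → A → ℝ} (hπ : IsPolicy π) (ρ : S → ℝ)
    (hρ : ∀ s, 0 < ρ s) (hρ1 : ∑ s, ρ s = 1) (k : ℕ) :
    (∀ s, 0 ≤ (((Pmat K π)ᵀ) ^ k *ᵥ ρ) s) ∧ ∑ s, (((Pmat K π)ᵀ) ^ k *ᵥ ρ) s = 1 := by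
  induction k with
  | zero => simpa [hρ1] using fun s => (hρ s).le
  | succ k ih =>
    rw [pow_succ', ← mulVec_mulVec]
    generalize ((Pmat K π)ᵀ) ^ k *ᵥ ρ = w at ih
    simp only [mulVec, dotProduct, transpose_apply]
    refine ⟨fun s => Finset.sum_nonneg fun s' _ => mul_nonneg (Pmat_nonneg hK hπ _ _) (ih.1 _), ?_⟩
    rw [Finset.sum_comm]
    simp only [← Finset.sum_mul, Pmat_sum hK hπ, one_mul, ih.2]

theorem Vreg_eq [Fintype S] [DecidableEq S] [Fintype A] {K : S → A → S → ℝ}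
    (hK : IsKernel K) {π : S → A → ℝ} (hπ : IsPolicy π) (r : S → A → ℝ) (γ τ : ℝ)
    (hγ0 : 0 < γ) (hγ1 : γ < 1) (s : S) :
    Vreg K r γ τ π s = regCost r τ π s + γ * ∑ s', Pmat K π s s' * Vreg K r γ τ π s' := by
  have hb := Pmat_pow_bound hK hπ (regCost r τ π) (∑ s, |regCost r τ π s|)
    (fun s => Finset.single_le_sum (f := fun s => |regCost r τ π s|)
      (fun _ _ => abs_nonneg _) (Finset.mem_univ s))
  have h := (series_eq (Pmat K π) (regCost r τ π) γ _ hγ0 hγ1 hb).2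
  exact congrFun h s

theorem dvisit_flow [Fintype S] [DecidableEq S] [Fintype A] {K : S → A → S → ℝ}
    (hK : IsKernel K) {π : S → A → ℝ} (hπ : IsPolicy π) (γ : ℝ)
    (hγ0 : 0 < γ) (hγ1 : γ < 1) (ρ : S → ℝ)
    (hρ : ∀ s, 0 < ρ s) (hρ1 : ∑ s, ρ s = 1) (s : S) :
    0 ≤ dvisit K γ ρ π s ∧
    dvisit K γ ρ π s = (1 - γ) * ρ s + γ * ∑ s', dvisit K γ ρ π s' * Pmat K π s' s := by
  have hP := PmatT_pow hK hπ ρ hρ hρ1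
  have hb : ∀ k s, |(((Pmat K π)ᵀ) ^ k *ᵥ ρ) s| ≤ 1 := by
    intro k s
    rw [abs_of_nonneg ((hP k).1 s), ← (hP k).2]
    exact Finset.single_le_sum (f := fun s => (((Pmat K π)ᵀ) ^ k *ᵥ ρ) s)
      (fun s _ => (hP k).1 s) (Finset.mem_univ s)
  obtain ⟨hs, h⟩ := series_eq ((Pmat K π)ᵀ) ρ γ _ hγ0 hγ1 hb
  constructor
  · unfold dvisit
    rw [Pi.smul_apply, tsum_apply hs]
    refine mul_nonneg (by linarith) (tsum_nonneg fun k => ?_)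
    exact mul_nonneg (pow_nonneg hγ0.le k) ((hP k).1 s)
  · unfold dvisit
    generalize (∑' k : ℕ, γ ^ k • (((Pmat K π)ᵀ) ^ k *ᵥ ρ)) = T at h
    have h2 := congrFun h s
    simp only [Pi.add_apply, Pi.smul_apply, smul_eq_mul, mulVec, dotProduct,
      transpose_apply] at h2 ⊢
    rw [h2, mul_add]
    congr 1
    rw [mul_left_comm, Finset.mul_sum (a := 1 - γ)]
    congr 1
    exact Finset.sum_congr rfl fun _ _ => by ring

theorem dvisit_pos [Fintype S] [DecidableEq S] [Fintype A] {K : S → A → S → ℝ}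
    (hK : IsKernel K) {π : S → A → ℝ} (hπ : IsPolicy π) (γ : ℝ)
    (hγ0 : 0 < γ) (hγ1 : γ < 1) (ρ : S → ℝ)
    (hρ : ∀ s, 0 < ρ s) (hρ1 : ∑ s, ρ s = 1) (s : S) : 0 < dvisit K γ ρ π s := by
  have h := dvisit_flow hK hπ γ hγ0 hγ1 ρ hρ hρ1
  rw [(h s).2]
  have : 0 ≤ ∑ s', dvisit K γ ρ π s' * Pmat K π s' s :=
    Finset.sum_nonneg fun s' _ => mul_nonneg (h s').1 (Pmat_nonneg hK hπ _ _)
  have h1 : 0 < (1 - γ) * ρ s := mul_pos (by linarith) (hρ s)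
  positivity

theorem flow_unique [Fintype S] [DecidableEq S] [Fintype A] {K : S → A → S → ℝ}
    (hK : IsKernel K) {π : S → A → ℝ} (hπ : IsPolicy π) (γ : ℝ)
    (hγ0 : 0 < γ) (hγ1 : γ < 1) (ρ d e : S → ℝ)
    (hd : ∀ s, d s = (1 - γ) * ρ s + γ * ∑ s', d s' * Pmat K π s' s)
    (he : ∀ s, e s = (1 - γ) * ρ s + γ * ∑ s', e s' * Pmat K π s' s) : d = e := by
  have h1 : ∀ s, |d s - e s| ≤ γ * ∑ s', |d s' - e s'| * Pmat K π s' s := by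
    intro s
    have : d s - e s = γ * ∑ s', (d s' - e s') * Pmat K π s' s := by
      simp only [sub_mul, Finset.sum_sub_distrib]
      rw [mul_sub]
      linarith [hd s, he s]
    rw [this, abs_mul, abs_of_pos hγ0]
    refine mul_le_mul_of_nonneg_left ?_ hγ0.le
    refine (Finset.abs_sum_le_sum_abs _ _).trans (le_of_eq ?_)
    exact Finset.sum_congr rfl fun s' _ => by
      rw [abs_mul, abs_of_nonneg (Pmat_nonneg hK hπ s' s)]
  have h2 : ∑ s, |d s - e s| ≤ γ * ∑ s, |d s - e s| := by
    calc _ ≤ ∑ s, γ * ∑ s', |d s' - e s'| * Pmat K π s' s := Finset.sum_le_sum fun s _ => h1 s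
      _ = _ := by
        rw [← Finset.mul_sum, Finset.sum_comm]
        simp only [← Finset.mul_sum, Pmat_sum hK hπ, mul_one]
  have h3 : 0 ≤ ∑ s, |d s - e s| := Finset.sum_nonneg fun _ _ => abs_nonneg _
  have h4 : ∑ s, |d s - e s| = 0 := by nlinarith
  rw [Finset.sum_eq_zero_iff_of_nonneg (fun _ _ => abs_nonneg _)] at h4
  funext s
  have := h4 s (Finset.mem_univ s)
  rw [abs_eq_zero] at this
  linarith

/-- State-action occupancy measures, described by the flow constraints. -/
def IsOcc [Fintype S] [Fintype A] (K : S → A → S → ℝ) (γ : ℝ) (ρ : S → ℝ)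
    (x : S → A → ℝ) : Prop :=
  (∀ s a, 0 ≤ x s a) ∧
    ∀ s, ∑ a, x s a = (1 - γ) * ρ s + γ * ∑ s', ∑ a, x s' a * K s' a s

/-- Occupancy measure of a policy. -/
def occ [Fintype S] [DecidableEq S] [Fintype A] (K : S → A → S → ℝ) (γ : ℝ) (ρ : S → ℝ)
    (π : S → A → ℝ) : S → A → ℝ := fun s a => dvisit K γ ρ π s * π s a

/-- Entropy of the occupancy measure. -/
def occEnt [Fintype S] [Fintype A] (x : S → A → ℝ) : ℝ :=
  ∑ s, (∑ a, -(x s a * Real.log (x s a)) + (∑ a, x s a) * Real.log (∑ a, x s a))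

theorem occ_isOcc [Fintype S] [DecidableEq S] [Fintype A] {K : S → A → S → ℝ}
    (hK : IsKernel K) {π : S → A → ℝ} (hπ : IsPolicy π) (γ : ℝ)
    (hγ0 : 0 < γ) (hγ1 : γ < 1) (ρ : S → ℝ)
    (hρ : ∀ s, 0 < ρ s) (hρ1 : ∑ s, ρ s = 1) : IsOcc K γ ρ (occ K γ ρ π) := by
  have h := dvisit_flow hK hπ γ hγ0 hγ1 ρ hρ hρ1
  refine ⟨fun s a => mul_nonneg (h s).1 (hπ.1 s a), fun s => ?_⟩
  simp only [occ, mul_assoc, ← Finset.mul_sum, hπ.2, mul_one]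
  exact (h s).2

theorem occ_return [Fintype S] [DecidableEq S] [Fintype A] {K : S → A → S → ℝ}
    (hK : IsKernel K) {π : S → A → ℝ} (hπ : IsPolicy π) (γ : ℝ)
    (hγ0 : 0 < γ) (hγ1 : γ < 1) (ρ : S → ℝ)
    (hρ : ∀ s, 0 < ρ s) (hρ1 : ∑ s, ρ s = 1) (r : S → A → ℝ) :
    (1 - γ) * Jreg K r γ 0 ρ π = ∑ s, ∑ a, occ K γ ρ π s a * r s a := by
  have h := fun s => (dvisit_flow hK hπ γ hγ0 hγ1 ρ hρ hρ1 s).2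
  have hV := Vreg_eq hK hπ r γ 0 hγ0 hγ1
  have e1 : (1 - γ) * Jreg K r γ 0 ρ π
      = ∑ s, dvisit K γ ρ π s * Vreg K r γ 0 π s
        - γ * ∑ s, (∑ s', dvisit K γ ρ π s' * Pmat K π s' s) * Vreg K r γ 0 π s := by
    unfold Jreg
    rw [Finset.mul_sum, Finset.mul_sum, ← Finset.sum_sub_distrib]
    refine Finset.sum_congr rfl fun s _ => ?_
    linear_combination (-Vreg K r γ 0 π s) * h s
  have e2 : ∑ s, dvisit K γ ρ π s * Vreg K r γ 0 π s
      = ∑ s, dvisit K γ ρ π s * (∑ a, π s a * r s a)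
        + γ * ∑ s, dvisit K γ ρ π s * ∑ s', Pmat K π s s' * Vreg K r γ 0 π s' := by
    rw [Finset.mul_sum, ← Finset.sum_add_distrib]
    refine Finset.sum_congr rfl fun s _ => ?_
    have := hV s
    simp only [regCost, zero_mul, add_zero] at this
    linear_combination (dvisit K γ ρ π s) * this
  have e3 : ∑ s, (∑ s', dvisit K γ ρ π s' * Pmat K π s' s) * Vreg K r γ 0 π s
      = ∑ s, dvisit K γ ρ π s * ∑ s', Pmat K π s s' * Vreg K r γ 0 π s' := by
    simp only [Finset.sum_mul, Finset.mul_sum]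
    rw [Finset.sum_comm]
    simp only [mul_assoc]
  rw [e1, e2, e3]
  simp only [occ, mul_assoc, ← Finset.mul_sum]
  ring

theorem occ_ent [Fintype S] [DecidableEq S] [Fintype A] {K : S → A → S → ℝ}
    (hK : IsKernel K) {π : S → A → ℝ} (hπ : IsPolicy π) (γ : ℝ)
    (hγ0 : 0 < γ) (hγ1 : γ < 1) (ρ : S → ℝ)
    (hρ : ∀ s, 0 < ρ s) (hρ1 : ∑ s, ρ s = 1) :
    ∑ s, dvisit K γ ρ π s * entS π s = occEnt (occ K γ ρ π) := by
  unfold occEnt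
  refine Finset.sum_congr rfl fun s _ => ?_
  have hd := dvisit_pos hK hπ γ hγ0 hγ1 ρ hρ hρ1 s
  have hsum : ∑ a, occ K γ ρ π s a = dvisit K γ ρ π s := by
    simp only [occ, ← Finset.mul_sum, hπ.2, mul_one]
  rw [hsum]
  have : ∀ a, -(occ K γ ρ π s a * Real.log (occ K γ ρ π s a))
      = dvisit K γ ρ π s * (-(π s a * Real.log (π s a)))
        - occ K γ ρ π s a * Real.log (dvisit K γ ρ π s) := by
    intro a
    unfold occ
    rcases (hπ.1 s a).eq_or_lt with h0 | h0
    · simp [← h0]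
    · rw [Real.log_mul hd.ne' h0.ne']
      ring
  simp only [this, Finset.sum_sub_distrib, ← Finset.sum_mul, hsum, ← Finset.mul_sum, entS]
  ring

/-- Policy recovered from an occupancy measure. -/
def polOf [Fintype A] (x : S → A → ℝ) : S → A → ℝ := fun s a => x s a / ∑ a, x s a

theorem IsOcc.sum_pos [Fintype S] [Fintype A] {K : S → A → S → ℝ}
    (hK : IsKernel K) {γ : ℝ} (hγ0 : 0 < γ) (hγ1 : γ < 1) {ρ : S → ℝ}
    (hρ : ∀ s, 0 < ρ s) {x : S → A → ℝ} (hx : IsOcc K γ ρ x) (s : S) : 0 < ∑ a, x s a := by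
  rw [hx.2 s]
  have : 0 ≤ ∑ s', ∑ a, x s' a * K s' a s :=
    Finset.sum_nonneg fun s' _ => Finset.sum_nonneg fun a _ => mul_nonneg (hx.1 _ _) (hK.1 _ _ _)
  have h1 : 0 < (1 - γ) * ρ s := mul_pos (by linarith) (hρ s)
  positivity

theorem polOf_spec [Fintype S] [DecidableEq S] [Fintype A] {K : S → A → S → ℝ}
    (hK : IsKernel K) {γ : ℝ} (hγ0 : 0 < γ) (hγ1 : γ < 1) {ρ : S → ℝ}
    (hρ : ∀ s, 0 < ρ s) (hρ1 : ∑ s, ρ s = 1) {x : S → A → ℝ} (hx : IsOcc K γ ρ x) :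
    IsPolicy (polOf x) ∧ (dvisit K γ ρ (polOf x) = fun s => ∑ a, x s a) ∧
      occ K γ ρ (polOf x) = x := by
  have hpos := fun s => hx.sum_pos hK hγ0 hγ1 hρ s
  have hp : IsPolicy (polOf x) := by
    refine ⟨fun s a => div_nonneg (hx.1 s a) (hpos s).le, fun s => ?_⟩
    simp only [polOf]
    rw [← Finset.sum_div, div_self (hpos s).ne']
  have hd : dvisit K γ ρ (polOf x) = fun s => ∑ a, x s a := by
    refine flow_unique hK hp γ hγ0 hγ1 ρ _ _
      (fun s => (dvisit_flow hK hp γ hγ0 hγ1 ρ hρ hρ1 s).2) (fun s => ?_)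
    rw [hx.2 s]
    congr 2
    refine Finset.sum_congr rfl fun s' _ => ?_
    rw [Pmat, Matrix.of_apply, Finset.mul_sum]
    refine Finset.sum_congr rfl fun a _ => ?_
    simp only [polOf]
    have := (hpos s').ne'
    field_simp
  refine ⟨hp, hd, ?_⟩
  funext s a
  simp only [occ, hd, polOf]
  exact mul_div_cancel₀ _ (hpos s).ne'

theorem isCompact_occ [Fintype S] [Fintype A] {K : S → A → S → ℝ}
    (hK : IsKernel K) {γ : ℝ} (hγ1 : γ < 1) {ρ : S → ℝ} (hρ1 : ∑ s, ρ s = 1) :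
    IsCompact {x : S → A → ℝ | IsOcc K γ ρ x} := by
  refine IsCompact.of_isClosed_subset (isCompact_Icc (a := (0 : S → A → ℝ)) (b := 1)) ?_ ?_
  · have : {x : S → A → ℝ | IsOcc K γ ρ x} = (⋂ s, ⋂ a, {x : S → A → ℝ | 0 ≤ x s a}) ∩
        ⋂ s, {x : S → A → ℝ | ∑ a, x s a = (1 - γ) * ρ s + γ * ∑ s', ∑ a, x s' a * K s' a s} := by
      ext x; simp [IsOcc]
    rw [this]
    refine IsClosed.inter (isClosed_iInter fun s => isClosed_iInter fun a => ?_)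
      (isClosed_iInter fun s => ?_)
    · exact isClosed_le (by fun_prop) (by fun_prop)
    · exact isClosed_eq (by fun_prop) (by fun_prop)
  · intro x hx
    have ht : ∑ s, ∑ a, x s a = 1 := by
      have h1 : ∑ s, ∑ a, x s a = (1 - γ) + γ * ∑ s, ∑ a, x s a := by
        calc ∑ s, ∑ a, x s a = ∑ s, ((1 - γ) * ρ s + γ * ∑ s', ∑ a, x s' a * K s' a s) :=
              Finset.sum_congr rfl fun s _ => hx.2 s
          _ = _ := by
            rw [Finset.sum_add_distrib, ← Finset.mul_sum, hρ1, mul_one, ← Finset.mul_sum,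
              Finset.sum_comm]
            congr 2
            refine Finset.sum_congr rfl fun s _ => ?_
            rw [Finset.sum_comm]
            simp only [← Finset.mul_sum, hK.2, mul_one]
      have h2 : (1 - γ) * (∑ s, ∑ a, x s a - 1) = 0 := by linarith
      rcases mul_eq_zero.1 h2 with h | h <;> linarith
    refine ⟨fun s a => hx.1 s a, fun s a => ?_⟩
    show x s a ≤ 1
    rw [← ht]
    refine (Finset.single_le_sum (f := fun a => x s a) (fun a _ => hx.1 s a)
      (Finset.mem_univ a)).trans ?_
    exact Finset.single_le_sum (f := fun s => ∑ a, x s a)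
      (fun s _ => Finset.sum_nonneg fun a _ => hx.1 s a) (Finset.mem_univ s)

theorem continuous_occEnt [Fintype S] [Fintype A] :
    Continuous (occEnt : (S → A → ℝ) → ℝ) := by
  unfold occEnt
  refine continuous_finsetSum _ fun s _ => ?_
  refine Continuous.add (continuous_finsetSum _ fun a _ => ?_) ?_
  · exact (Real.continuous_mul_log.comp (g := fun t : ℝ => t * Real.log t)
      (f := fun x : S → A → ℝ => x s a) (by fun_prop)).neg
  · exact Real.continuous_mul_log.comp (g := fun t : ℝ => t * Real.log t)
      (f := fun x : S → A → ℝ => ∑ a, x s a) (by fun_prop)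

/-- Weighted strict concavity of the entropy summand. -/
theorem negMulLog_mix {d₁ d₂ p q : ℝ} (h₁ : 0 < d₁) (h₂ : 0 < d₂) (hp : 0 ≤ p) (hq : 0 ≤ q)
    (hne : p ≠ q) :
    (d₁ * -(p * Real.log p) + d₂ * -(q * Real.log q)) <
      (d₁ + d₂) * -((d₁ * p + d₂ * q) / (d₁ + d₂) * Real.log ((d₁ * p + d₂ * q) / (d₁ + d₂))) := by
  have hD : 0 < d₁ + d₂ := by positivity
  have h := Real.strictConcaveOn_negMulLog.2 (x := p) (y := q) hp hq hne
    (div_pos h₁ hD) (div_pos h₂ hD) (by field_simp)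
  simp only [smul_eq_mul, Real.negMulLog] at h
  have e : d₁ / (d₁ + d₂) * p + d₂ / (d₁ + d₂) * q = (d₁ * p + d₂ * q) / (d₁ + d₂) := by
    field_simp
  rw [e] at h
  have h' := mul_lt_mul_of_pos_left h hD
  have e2 : (d₁ + d₂) * (d₁ / (d₁ + d₂) * (-p * Real.log p) + d₂ / (d₁ + d₂) * (-q * Real.log q))
      = (d₁ * -(p * Real.log p) + d₂ * -(q * Real.log q)) := by
    field_simp
  rw [e2] at h'
  simpa only [neg_mul] using h'

/-- if `ρ` is strictly positive, there is exactly one optimal policy maximizing the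
discounted-visitation-weighted entropy over the set `Π*` of optimal policies. -/
theorem stmt_0 [Fintype S] [Fintype A] [DecidableEq S] [Nonempty S] [Nonempty A]
    (K : S → A → S → ℝ) (hK : IsKernel K)
    (γ : ℝ) (hγ0 : 0 < γ) (hγ1 : γ < 1)
    (ρ : S → ℝ) (hρpos : ∀ s, 0 < ρ s) (hρ1 : ∑ s, ρ s = 1)
    (r : S → A → ℝ) :
    ∃! πstar : S → A → ℝ,
      (IsPolicy πstar ∧ ∀ π, IsPolicy π → Jreg K r γ 0 ρ π ≤ Jreg K r γ 0 ρ πstar) ∧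
      ∀ π, (IsPolicy π ∧ ∀ π', IsPolicy π' → Jreg K r γ 0 ρ π' ≤ Jreg K r γ 0 ρ π) →
        ∑ s, dvisit K γ ρ π s * entS π s ≤ ∑ s, dvisit K γ ρ πstar s * entS πstar s := by
  have hg : 0 < 1 - γ := by linarith
  let R : (S → A → ℝ) → ℝ := fun x => ∑ s, ∑ a, x s a * r s a
  have hRc : Continuous R := by
    show Continuous fun x : S → A → ℝ => ∑ s, ∑ a, x s a * r s a
    fun_prop
  have hocc : ∀ π, IsPolicy π → IsOcc K γ ρ (occ K γ ρ π) := fun π hπ =>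
    occ_isOcc hK hπ γ hγ0 hγ1 ρ hρpos hρ1
  have hret : ∀ π, IsPolicy π → (1 - γ) * Jreg K r γ 0 ρ π = R (occ K γ ρ π) := fun π hπ =>
    occ_return hK hπ γ hγ0 hγ1 ρ hρpos hρ1 r
  have hent : ∀ π, IsPolicy π → ∑ s, dvisit K γ ρ π s * entS π s = occEnt (occ K γ ρ π) :=
    fun π hπ => occ_ent hK hπ γ hγ0 hγ1 ρ hρpos hρ1
  have hpol : ∀ x, IsOcc K γ ρ x → IsPolicy (polOf x) ∧
      (dvisit K γ ρ (polOf x) = fun s => ∑ a, x s a) ∧ occ K γ ρ (polOf x) = x :=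
    fun x hx => polOf_spec hK hγ0 hγ1 hρpos hρ1 hx
  have hX := isCompact_occ hK hγ1 hρ1
  have hne : {x : S → A → ℝ | IsOcc K γ ρ x}.Nonempty := by
    have hu : IsPolicy (fun (_ : S) (_ : A) => (1 : ℝ) / Fintype.card A) :=
      ⟨fun _ _ => by positivity, fun _ => by simp⟩
    exact ⟨_, hocc _ hu⟩
  obtain ⟨x₀, hx₀, hmax⟩ := hX.exists_isMaxOn hne hRc.continuousOn
  have hmax' : ∀ x, IsOcc K γ ρ x → R x ≤ R x₀ := fun x hx => hmax hx
  -- characterization of the optimal policies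
  have hopt : ∀ π, IsPolicy π → ((∀ π', IsPolicy π' → Jreg K r γ 0 ρ π' ≤ Jreg K r γ 0 ρ π) ↔
      R (occ K γ ρ π) = R x₀) := by
    intro π hπ
    constructor
    · intro h
      refine le_antisymm (hmax' _ (hocc π hπ)) ?_
      obtain ⟨hp0, -, ho0⟩ := hpol x₀ hx₀
      have := mul_le_mul_of_nonneg_left (h _ hp0) hg.le
      rwa [hret _ hp0, hret _ hπ, ho0] at this
    · intro h π' hπ'
      refine le_of_mul_le_mul_left ?_ hg
      rw [hret _ hπ', hret _ hπ, h]
      exact hmax' _ (hocc π' hπ')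
  have hX' : IsCompact ({x : S → A → ℝ | IsOcc K γ ρ x} ∩ {x | R x = R x₀}) :=
    hX.inter_right (isClosed_eq hRc continuous_const)
  obtain ⟨x₁, ⟨hx₁, hRx₁⟩, hmax₁⟩ := hX'.exists_isMaxOn ⟨x₀, hx₀, rfl⟩
    (continuous_occEnt (S := S) (A := A)).continuousOn
  obtain ⟨hp1, -, ho1⟩ := hpol x₁ hx₁
  refine ⟨polOf x₁, ⟨⟨hp1, ?_⟩, ?_⟩, ?_⟩
  · rw [hopt _ hp1, ho1]
    exact hRx₁
  · rintro π ⟨hπ, hπo⟩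
    rw [hent _ hπ, hent _ hp1, ho1]
    exact hmax₁ ⟨hocc π hπ, (hopt π hπ).1 hπo⟩
  · rintro π ⟨⟨hπ, hπo⟩, hπm⟩
    by_contra hneq
    have hπ2 := (hopt π hπ).1 hπo
    -- values agree
    have hv1 : occEnt x₁ ≤ occEnt (occ K γ ρ π) := by
      have := hπm (polOf x₁) ⟨hp1, (hopt _ hp1).2 (by rw [ho1]; exact hRx₁)⟩
      rwa [hent _ hπ, hent _ hp1, ho1] at this
    have hv2 := hent _ hπ
    have hv3 := hent _ hp1
    rw [ho1] at hv3
    -- the midpoint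
    let y : S → A → ℝ := fun s a => (occ K γ ρ π s a + x₁ s a) / 2
    have hy : IsOcc K γ ρ y := by
      have h1 := hocc π hπ
      refine ⟨fun s a => div_nonneg (add_nonneg (h1.1 s a) (hx₁.1 s a)) (by norm_num), fun s => ?_⟩
      have e1 : ∑ a, y s a = (∑ a, occ K γ ρ π s a + ∑ a, x₁ s a) / 2 := by
        rw [← Finset.sum_add_distrib, Finset.sum_div]
      have e2 : ∑ s', ∑ a, y s' a * K s' a s = (∑ s', ∑ a, occ K γ ρ π s' a * K s' a s
          + ∑ s', ∑ a, x₁ s' a * K s' a s) / 2 := by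
        simp only [← Finset.sum_add_distrib, Finset.sum_div]
        exact Finset.sum_congr rfl fun s' _ => Finset.sum_congr rfl fun a _ => by
          simp only [y]; ring
      rw [e1, e2, h1.2 s, hx₁.2 s]
      ring
    have hRy : R y = R x₀ := by
      have e : R y = (R (occ K γ ρ π) + R x₁) / 2 := by
        simp only [R, ← Finset.sum_add_distrib, Finset.sum_div]
        exact Finset.sum_congr rfl fun s' _ => Finset.sum_congr rfl fun a _ => by
          simp only [y]; ring
      have h1 : R x₁ = R x₀ := hRx₁
      rw [e, hπ2, h1]
      ring
    have hvy : occEnt y ≤ occEnt x₁ := hmax₁ ⟨hy, hRy⟩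
    obtain ⟨hpy, hdy, hoy⟩ := hpol y hy
    have hvy2 := hent _ hpy
    rw [hoy] at hvy2
    have hd1 : ∀ s, 0 < dvisit K γ ρ π s := dvisit_pos hK hπ γ hγ0 hγ1 ρ hρpos hρ1
    have hd2 : ∀ s, 0 < dvisit K γ ρ (polOf x₁) s := dvisit_pos hK hp1 γ hγ0 hγ1 ρ hρpos hρ1
    have hyD : ∀ s, ∑ a, y s a = (dvisit K γ ρ π s + dvisit K γ ρ (polOf x₁) s) / 2 := by
      intro s
      have e1 : ∑ a, y s a = (∑ a, occ K γ ρ π s a + ∑ a, occ K γ ρ (polOf x₁) s a) / 2 := by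
        rw [← Finset.sum_add_distrib, Finset.sum_div, ho1]
      rw [e1]
      simp only [occ, ← Finset.mul_sum, hπ.2, hp1.2, mul_one]
    have hyp : ∀ s a, polOf y s a = (dvisit K γ ρ π s * π s a
        + dvisit K γ ρ (polOf x₁) s * polOf x₁ s a) /
          (dvisit K γ ρ π s + dvisit K γ ρ (polOf x₁) s) := by
      intro s a
      have e1 : y s a = (occ K γ ρ π s a + occ K γ ρ (polOf x₁) s a) / 2 := by rw [ho1]
      show y s a / ∑ a, y s a = _
      rw [hyD, e1, div_div_div_cancel_right₀ (by norm_num)]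
      rfl
    have key : ∑ s, ∑ a, (dvisit K γ ρ π s * -(π s a * Real.log (π s a))
        + dvisit K γ ρ (polOf x₁) s * -(polOf x₁ s a * Real.log (polOf x₁ s a)))
        < ∑ s, ∑ a, (dvisit K γ ρ π s + dvisit K γ ρ (polOf x₁) s)
          * -(polOf y s a * Real.log (polOf y s a)) := by
      have hle : ∀ s a, (dvisit K γ ρ π s * -(π s a * Real.log (π s a))
        + dvisit K γ ρ (polOf x₁) s * -(polOf x₁ s a * Real.log (polOf x₁ s a)))
        ≤ (dvisit K γ ρ π s + dvisit K γ ρ (polOf x₁) s)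
          * -(polOf y s a * Real.log (polOf y s a)) := by
        intro s a
        by_cases h : π s a = polOf x₁ s a
        · have hh : polOf y s a = polOf x₁ s a := by
            have := add_pos (hd1 s) (hd2 s)
            rw [hyp, h, ← add_mul]
            field_simp
          rw [hh, h, add_mul]
        · rw [hyp]
          exact (negMulLog_mix (hd1 s) (hd2 s) (hπ.1 s a) (hp1.1 s a) h).le
      obtain ⟨s, hs⟩ := Function.ne_iff.1 hneq
      obtain ⟨a, ha⟩ := Function.ne_iff.1 hs
      refine Finset.sum_lt_sum (fun s _ => Finset.sum_le_sum fun a _ => hle s a)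
        ⟨s, Finset.mem_univ s, Finset.sum_lt_sum (fun a _ => hle s a) ⟨a, Finset.mem_univ a, ?_⟩⟩
      rw [hyp]
      exact negMulLog_mix (hd1 s) (hd2 s) (hπ.1 s a) (hp1.1 s a) ha
    have k1 : ∑ s, ∑ a, (dvisit K γ ρ π s * -(π s a * Real.log (π s a))
        + dvisit K γ ρ (polOf x₁) s * -(polOf x₁ s a * Real.log (polOf x₁ s a)))
        = occEnt (occ K γ ρ π) + occEnt x₁ := by
      rw [← hv2, ← hv3]
      simp only [Finset.sum_add_distrib, ← Finset.mul_sum, entS]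
    have k2 : ∑ s, ∑ a, (dvisit K γ ρ π s + dvisit K γ ρ (polOf x₁) s)
          * -(polOf y s a * Real.log (polOf y s a)) = 2 * occEnt y := by
      rw [← hvy2, hdy, Finset.mul_sum]
      refine Finset.sum_congr rfl fun s _ => ?_
      rw [← Finset.mul_sum]
      simp only [hyD, entS]
      ring
    rw [k1, k2] at key
    linarith
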